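/- Let (h_n, u_n, f_n) be a contradiction sequence and let χ ∈ C_c^∞(ℝ) with χ(z) = 1 for |z| ≤ 1 and χ(z) = 0 for |z| ≥ 2. Then ‖a·∇(χ(a/h_n)·u_n)‖_{L²} = o(h_n^{1/2}) as n → ∞. -/

import Mathlib

open MeasureTheory Complex ComplexConjugate

noncomputable section

/-- Partial derivative `∂u/∂xᵢ` of a complex-valued function on `ℝ^d`. -/
def pd {d : ℕ} (i : Fin d) (u : EuclideanSpace ℝ (Fin d) → ℂ)
    (x : EuclideanSpace ℝ (Fin d)) : ℂ :=
  fderiv ℝ u x (EuclideanSpace.single i (1 : ℝ))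

/-- Laplacian `Δu = ∑ᵢ ∂²u/∂xᵢ²` of a complex-valued function on `ℝ^d`. -/
def lap {d : ℕ} (u : EuclideanSpace ℝ (Fin d) → ℂ)
    (x : EuclideanSpace ℝ (Fin d)) : ℂ :=
  ∑ i : Fin d, pd i (pd i u) x

/-- The semiclassical Kelvin–Voigt operator
`P_h u = -h²Δu - u - i h (∇a·∇u + a Δu)`. -/
def Ph {d : ℕ} (h : ℝ) (a : EuclideanSpace ℝ (Fin d) → ℝ)
    (u : EuclideanSpace ℝ (Fin d) → ℂ) (x : EuclideanSpace ℝ (Fin d)) : ℂ :=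
  -(h ^ 2 : ℂ) * lap u x - u x -
    Complex.I * (h : ℂ) *
      ((∑ i : Fin d, (fderiv ℝ a x (EuclideanSpace.single i (1 : ℝ)) : ℂ) * pd i u x) +
        (a x : ℂ) * lap u x)

open Filter Asymptotics

/-!
Since `P_h u = -div((h² + iha)∇u) - u`, the imaginary part of `⟨u, P_h u⟩` is `h ∫ a|∇u|²`; hence
`h ∫ a|∇u|² ≤ ‖u‖ ‖P_h u‖ = o(h)` and `∫ a|∇u|² = o(1)`. Pairing `P_h u` with `au` instead, and
controlling `∇(au) = a∇u + u∇a` through `|∇a| ≤ K a^{1/2}`, then gives `∫ a|u|² = o(h)`.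

For `g = χ(·/h)` one has `a∇(g(a)u) = a g(a)∇u + a g'(a)u∇a`. By scaling, `t g(t)² = O(h)` while
`t g'(t) = O(1)` uniformly in `t ≥ 0`, so the squared norm is at most a constant times
`h ∫ a|∇u|² + ∫ a|u|²`, which is `o(h)`.
-/

open scoped InnerProductSpace

section CauchySchwarz

variable {α E F : Type*} [MeasurableSpace α] {μ : Measure α}
  [NormedAddCommGroup E] [NormedAddCommGroup F]

lemma integral_norm_mul_norm_le_sqrt_mul_sqrt {f : α → E} {g : α → F}
    (hf : MemLp f 2 μ) (hg : MemLp g 2 μ) :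
    ∫ x, ‖f x‖ * ‖g x‖ ∂μ ≤ √(∫ x, ‖f x‖ ^ 2 ∂μ) * √(∫ x, ‖g x‖ ^ 2 ∂μ) := by
  have holder := integral_mul_norm_le_Lp_mul_Lq (μ := μ) Real.HolderConjugate.two_two
    (by simpa using hf.norm) (by simpa using hg.norm)
  simpa [Real.sqrt_eq_rpow] using holder

lemma norm_integral_conj_mul_le {φ f g : α → ℂ} {C : ℝ} (hC : 0 ≤ C)
    (hφ : ∀ x, ‖φ x‖ ≤ C * ‖g x‖) (hg : MemLp g 2 μ) (hf : MemLp f 2 μ) :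
    ‖∫ x, conj (φ x) * f x ∂μ‖ ≤ C * (√(∫ x, ‖g x‖ ^ 2 ∂μ) * √(∫ x, ‖f x‖ ^ 2 ∂μ)) := by
  have hgf : Integrable (fun x => ‖g x‖ * ‖f x‖) μ := hg.norm.integrable_mul hf.norm
  calc ‖∫ x, conj (φ x) * f x ∂μ‖
      ≤ ∫ x, C * (‖g x‖ * ‖f x‖) ∂μ := by
        refine norm_integral_le_of_norm_le (hgf.const_mul C) (.of_forall fun x => ?_)
        rw [norm_mul, RCLike.norm_conj, ← mul_assoc]
        gcongr
        exact hφ x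
    _ ≤ _ := by
        rw [integral_const_mul]
        gcongr
        exact integral_norm_mul_norm_le_sqrt_mul_sqrt hg hf

end CauchySchwarz

lemma exists_abs_self_mul_le {g : ℝ → ℝ} (hg : Continuous g) (hgs : HasCompactSupport g) :
    ∃ M, ∀ z, |z * g z| ≤ M :=
  (continuous_id.mul hg).bounded_above_of_compact_support hgs.mul_left

section PartialDerivatives

variable {d : ℕ} {u v : EuclideanSpace ℝ (Fin d) → ℂ} {a : EuclideanSpace ℝ (Fin d) → ℝ}
  {x : EuclideanSpace ℝ (Fin d)}

lemma contDiff_pd {m n : WithTop ℕ∞} (hu : ContDiff ℝ n u) (hmn : m + 1 ≤ n) (i : Fin d) :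
    ContDiff ℝ m (pd i u) :=
  (hu.fderiv_right hmn).clm_apply contDiff_const

lemma continuous_pd (hu : ContDiff ℝ 1 u) (i : Fin d) : Continuous (pd i u) :=
  (contDiff_pd hu (m := 0) (by simp) i).continuous

lemma hasCompactSupport_pd (hu : HasCompactSupport u) (i : Fin d) :
    HasCompactSupport (pd i u) :=
  hu.fderiv_apply (𝕜 := ℝ) _

lemma pd_mul (hu : DifferentiableAt ℝ u x) (hv : DifferentiableAt ℝ v x) (i : Fin d) :
    pd i (fun y => u y * v y) x = u x * pd i v x + v x * pd i u x := by
  simp [pd, fderiv_fun_mul hu hv]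

lemma pd_conj (u : EuclideanSpace ℝ (Fin d) → ℂ) (x : EuclideanSpace ℝ (Fin d)) (i : Fin d) :
    pd i (fun y => conj (u y)) x = conj (pd i u x) := by
  simp only [pd]
  rw [show (fun y => conj (u y)) = conjCLE ∘ u from rfl, conjCLE.comp_fderiv]
  simp

lemma pd_ofReal (ha : DifferentiableAt ℝ a x) (i : Fin d) :
    pd i (fun y => (a y : ℂ)) x = fderiv ℝ a x (EuclideanSpace.single i (1 : ℝ)) := by
  have h : HasFDerivAt (fun y => (a y : ℂ)) (ofRealCLM.comp (fderiv ℝ a x)) x :=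
    ofRealCLM.hasFDerivAt.comp x ha.hasFDerivAt
  simp [pd, h.fderiv]

lemma integral_mul_pd_eq_neg (hu : ContDiff ℝ 1 u) (hv : ContDiff ℝ 1 v)
    (hvs : HasCompactSupport v) (i : Fin d) :
    ∫ x, u x * pd i v x = -∫ x, pd i u x * v x :=
  integral_mul_fderiv_eq_neg_fderiv_mul_of_integrable
    (((continuous_pd hu i).mul hv.continuous).integrable_of_hasCompactSupport hvs.mul_left)
    ((hu.continuous.mul (continuous_pd hv i)).integrable_of_hasCompactSupport
      (hasCompactSupport_pd hvs i).mul_left)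
    ((hu.continuous.mul hv.continuous).integrable_of_hasCompactSupport hvs.mul_left)
    (fun _ _ => (hu.differentiable one_ne_zero).differentiableAt)
    (fun _ _ => (hv.differentiable one_ne_zero).differentiableAt)

/-- The gradient of a complex-valued function on `ℝ^d`, as a vector of the Hermitian space `ℂ^d`,
so that `⟪∇v, ∇u⟫ = ∑ᵢ ∂ᵢu * conj ∂ᵢv`. -/
def cgrad (u : EuclideanSpace ℝ (Fin d) → ℂ) (x : EuclideanSpace ℝ (Fin d)) :
    EuclideanSpace ℂ (Fin d) :=
  WithLp.toLp 2 fun i => pd i u x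

lemma continuous_cgrad (hu : ContDiff ℝ 1 u) : Continuous (cgrad u) :=
  (PiLp.continuous_toLp 2 _).comp <|
    continuous_pi fun i => continuous_pd hu i

lemma hasCompactSupport_cgrad (hu : HasCompactSupport u) : HasCompactSupport (cgrad u) :=
  (hu.fderiv ℝ).mono fun x hx h => hx <| by ext i; simp [cgrad, pd, h]

lemma cgrad_mul (hu : DifferentiableAt ℝ u x) (hv : DifferentiableAt ℝ v x) :
    cgrad (fun y => u y * v y) x = u x • cgrad v x + v x • cgrad u x := by
  ext i
  simp [cgrad, pd_mul hu hv]

lemma inner_cgrad (u v : EuclideanSpace ℝ (Fin d) → ℂ) (x : EuclideanSpace ℝ (Fin d)) :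
    ⟪cgrad v x, cgrad u x⟫_ℂ = ∑ i, conj (pd i v x) * pd i u x := by
  simp [cgrad, PiLp.inner_apply, mul_comm]

lemma norm_sq_smul_cgrad (c : ℂ) (u : EuclideanSpace ℝ (Fin d) → ℂ)
    (x : EuclideanSpace ℝ (Fin d)) : ‖c • cgrad u x‖ ^ 2 = ∑ i, ‖c * pd i u x‖ ^ 2 := by
  simp [EuclideanSpace.norm_sq_eq, cgrad]

lemma norm_cgrad_ofReal (ha : DifferentiableAt ℝ a x) :
    ‖cgrad (fun y => (a y : ℂ)) x‖ = ‖gradient a x‖ := by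
  have hcoord (i : Fin d) :
      gradient a x i = fderiv ℝ a x (EuclideanSpace.single i (1 : ℝ)) := by
    simp [← inner_gradient_left, EuclideanSpace.inner_single_right]
  simp [EuclideanSpace.norm_eq, cgrad, pd_ofReal ha, hcoord]

lemma norm_gradient_comp {g : ℝ → ℝ} (hg : DifferentiableAt ℝ g (a x))
    (ha : DifferentiableAt ℝ a x) :
    ‖gradient (fun y => g (a y)) x‖ = |deriv g (a x)| * ‖gradient a x‖ := by
  have hcomp : HasFDerivAt (fun y => g (a y)) (deriv g (a x) • fderiv ℝ a x) x :=
    hg.hasDerivAt.comp_hasFDerivAt x ha.hasFDerivAt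
  simp [gradient, hcomp.fderiv, norm_smul]

end PartialDerivatives

section EnergyEstimates

variable {d : ℕ} {u ψ : EuclideanSpace ℝ (Fin d) → ℂ} {a : EuclideanSpace ℝ (Fin d) → ℝ}
  {h C K : ℝ}

/-- The complex coefficient `h² + iha` in the divergence form
`P_h u = -div((h² + iha)∇u) - u`. -/
def dampCoeff (h : ℝ) (a : EuclideanSpace ℝ (Fin d) → ℝ) (x : EuclideanSpace ℝ (Fin d)) : ℂ :=
  (h : ℂ) ^ 2 + I * h * a x

lemma contDiff_dampCoeff (h : ℝ) (ha : ContDiff ℝ 1 a) : ContDiff ℝ 1 (dampCoeff h a) :=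
  contDiff_const.add (contDiff_const.mul (ofRealCLM.contDiff.comp ha))

lemma pd_dampCoeff {x : EuclideanSpace ℝ (Fin d)} (h : ℝ) (ha : DifferentiableAt ℝ a x)
    (i : Fin d) :
    pd i (dampCoeff h a) x =
      I * h * (fderiv ℝ a x (EuclideanSpace.single i (1 : ℝ)) : ℂ) := by
  have had : DifferentiableAt ℝ (fun y => (a y : ℂ)) x :=
    ofRealCLM.differentiableAt.comp x ha
  have hderiv : HasFDerivAt (dampCoeff h a) ((I * h) • fderiv ℝ (fun y => (a y : ℂ)) x) x :=
    (had.hasFDerivAt.const_mul _).const_add _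
  rw [← pd_ofReal ha]
  simp [pd, hderiv.fderiv]

lemma norm_dampCoeff_le {x : EuclideanSpace ℝ (Fin d)} (hh : 0 ≤ h) (hax : 0 ≤ a x)
    (haC : a x ≤ C) : ‖dampCoeff h a x‖ ≤ h ^ 2 + h * C :=
  calc ‖dampCoeff h a x‖ ≤ ‖(h : ℂ) ^ 2‖ + ‖I * h * a x‖ := norm_add_le _ _
    _ = h ^ 2 + h * a x := by simp [abs_of_nonneg hh, abs_of_nonneg hax]
    _ ≤ h ^ 2 + h * C := by gcongr

lemma contDiff_dampCoeff_mul_pd (hu : ContDiff ℝ 2 u) (ha : ContDiff ℝ 1 a) (h : ℝ)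
    (i : Fin d) : ContDiff ℝ 1 fun y => dampCoeff h a y * pd i u y :=
  (contDiff_dampCoeff h ha).mul (contDiff_pd hu one_add_one_eq_two.le i)

lemma Ph_eq_neg_div_sub (hu : ContDiff ℝ 2 u) (ha : ContDiff ℝ 1 a) (h : ℝ)
    (x : EuclideanSpace ℝ (Fin d)) :
    Ph h a u x = -(∑ i, pd i (fun y => dampCoeff h a y * pd i u y) x) - u x := by
  have hterm (i : Fin d) : pd i (fun y => dampCoeff h a y * pd i u y) x =
      dampCoeff h a x * pd i (pd i u) x +
        I * h * ((fderiv ℝ a x (EuclideanSpace.single i (1 : ℝ)) : ℂ) * pd i u x) := by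
    rw [pd_mul ((contDiff_dampCoeff h ha).differentiable one_ne_zero x)
      ((contDiff_pd hu one_add_one_eq_two.le i).differentiable one_ne_zero x),
      pd_dampCoeff h (ha.differentiable one_ne_zero x)]
    ring
  simp only [hterm, Finset.sum_add_distrib, ← Finset.mul_sum, Ph, lap]
  simp only [dampCoeff]
  ring

lemma memLp_Ph (hu : ContDiff ℝ 2 u) (hus : HasCompactSupport u) (ha : ContDiff ℝ 1 a)
    (h : ℝ) : MemLp (Ph h a u) 2 := by
  have hdiv (i : Fin d) : MemLp (pd i fun y => dampCoeff h a y * pd i u y) 2 :=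
    (continuous_pd (contDiff_dampCoeff_mul_pd hu ha h i) i).memLp_of_hasCompactSupport
      (hasCompactSupport_pd (hasCompactSupport_pd hus i).mul_left i)
  rw [funext (Ph_eq_neg_div_sub hu ha h)]
  exact (memLp_finsetSum _ fun i _ => hdiv i).neg.sub
    (hu.continuous.memLp_of_hasCompactSupport hus)

lemma integral_conj_mul_Ph (hu : ContDiff ℝ 2 u) (hus : HasCompactSupport u)
    (hψ : ContDiff ℝ 1 ψ) (ha : ContDiff ℝ 1 a) (h : ℝ) :
    ∫ x, conj (ψ x) * Ph h a u x =
      (∫ x, dampCoeff h a x * ⟪cgrad ψ x, cgrad u x⟫_ℂ) - ∫ x, conj (ψ x) * u x := by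
  have hψc : ContDiff ℝ 1 fun x => conj (ψ x) := conjCLE.contDiff.comp hψ
  set flux : Fin d → EuclideanSpace ℝ (Fin d) → ℂ := fun i y => dampCoeff h a y * pd i u y
    with hflux_def
  have hflux (i : Fin d) : ContDiff ℝ 1 (flux i) := contDiff_dampCoeff_mul_pd hu ha h i
  have hfluxs (i : Fin d) : HasCompactSupport (flux i) := (hasCompactSupport_pd hus i).mul_left
  have hdiv_int (i : Fin d) : Integrable fun x => conj (ψ x) * pd i (flux i) x :=
    (hψc.continuous.mul (continuous_pd (hflux i) i)).integrable_of_hasCompactSupport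
      (hasCompactSupport_pd (hfluxs i) i).mul_left
  have hgrad_int (i : Fin d) : Integrable fun x => pd i (fun y => conj (ψ y)) x * flux i x :=
    ((continuous_pd hψc i).mul (hflux i).continuous).integrable_of_hasCompactSupport
      (hfluxs i).mul_left
  have hmass_int : Integrable fun x => conj (ψ x) * u x :=
    (hψc.continuous.mul hu.continuous).integrable_of_hasCompactSupport hus.mul_left
  calc ∫ x, conj (ψ x) * Ph h a u x
      = ∫ x, (-∑ i, conj (ψ x) * pd i (flux i) x) - conj (ψ x) * u x := by
        simp only [Ph_eq_neg_div_sub hu ha, mul_sub, mul_neg, Finset.mul_sum, hflux_def]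
    _ = (∑ i, ∫ x, pd i (fun y => conj (ψ y)) x * flux i x) - ∫ x, conj (ψ x) * u x := by
        rw [integral_sub (integrable_finsetSum _ fun i _ => hdiv_int i).fun_neg hmass_int,
          integral_neg, integral_finsetSum _ fun i _ => hdiv_int i, ← Finset.sum_neg_distrib]
        simp only [integral_mul_pd_eq_neg hψc (hflux _) (hfluxs _), neg_neg]
    _ = (∫ x, dampCoeff h a x * ⟪cgrad ψ x, cgrad u x⟫_ℂ) - ∫ x, conj (ψ x) * u x := by
        rw [← integral_finsetSum _ fun i _ => hgrad_int i]
        simp only [hflux_def, pd_conj, inner_cgrad, Finset.mul_sum, mul_left_comm]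

lemma integrable_damping_mul_norm_sq_cgrad (hu : ContDiff ℝ 1 u) (hus : HasCompactSupport u)
    (ha : Continuous a) : Integrable fun x => a x * ‖cgrad u x‖ ^ 2 :=
  (ha.mul ((continuous_cgrad hu).norm.pow 2)).integrable_of_hasCompactSupport <|
    (hasCompactSupport_cgrad hus).mono fun x hx h => hx <| by simp [h]

lemma mul_integral_damping_mul_norm_sq_cgrad_le (hu : ContDiff ℝ 2 u) (hus : HasCompactSupport u)
    (ha : ContDiff ℝ 1 a) (h : ℝ) :
    h * ∫ x, a x * ‖cgrad u x‖ ^ 2 ≤ √(∫ x, ‖u x‖ ^ 2) * √(∫ x, ‖Ph h a u x‖ ^ 2) := by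
  have hu1 : ContDiff ℝ 1 u := hu.of_le one_le_two
  have hint : Integrable fun x => dampCoeff h a x * ⟪cgrad u x, cgrad u x⟫_ℂ :=
    ((contDiff_dampCoeff h ha).continuous.mul
      ((continuous_cgrad hu1).inner (continuous_cgrad hu1))).integrable_of_hasCompactSupport <|
    (hasCompactSupport_cgrad hus).mono fun x hx h => hx <| by simp [h]
  have hmass : ∫ x, conj (u x) * u x = ((∫ x, ‖u x‖ ^ 2 : ℝ) : ℂ) := by
    simp [← integral_complex_ofReal, conj_mul']
  have him : (∫ x, conj (u x) * Ph h a u x).im = h * ∫ x, a x * ‖cgrad u x‖ ^ 2 := by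
    rw [integral_conj_mul_Ph hu hus hu1 ha, hmass, sub_im, ofReal_im, sub_zero,
      ← integral_const_mul]
    refine (integral_im hint).symm.trans (integral_congr_ae (.of_forall fun x => ?_))
    simp [dampCoeff, inner_self_eq_norm_sq_to_K, ← ofReal_pow, mul_assoc]
  calc h * ∫ x, a x * ‖cgrad u x‖ ^ 2
      ≤ ‖∫ x, conj (u x) * Ph h a u x‖ := by
        rw [← him]
        exact (le_abs_self _).trans (abs_im_le_norm _)
    _ ≤ 1 * (√(∫ x, ‖u x‖ ^ 2) * √(∫ x, ‖Ph h a u x‖ ^ 2)) :=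
        norm_integral_conj_mul_le zero_le_one (fun x => (one_mul _).ge)
          (hu.continuous.memLp_of_hasCompactSupport hus) (memLp_Ph hu hus ha h)
    _ = _ := one_mul _

lemma norm_inner_cgrad_ofReal_mul_le {x : EuclideanSpace ℝ (Fin d)}
    (hu : DifferentiableAt ℝ u x) (ha : DifferentiableAt ℝ a x) (hax : 0 ≤ a x)
    (haK : ‖gradient a x‖ ≤ K * √(a x)) :
    ‖⟪cgrad (fun y => (a y : ℂ) * u y) x, cgrad u x⟫_ℂ‖ ≤
      a x * ‖cgrad u x‖ ^ 2 + K * (‖u x‖ * (√(a x) * ‖cgrad u x‖)) := by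
  have hgrad : ‖cgrad (fun y => (a y : ℂ) * u y) x‖ ≤
      a x * ‖cgrad u x‖ + ‖u x‖ * ‖gradient a x‖ := by
    have hac : DifferentiableAt ℝ (fun y => (a y : ℂ)) x :=
      ofRealCLM.differentiableAt.comp x ha
    rw [cgrad_mul hac hu]
    refine (norm_add_le _ _).trans_eq ?_
    rw [norm_smul, norm_smul, norm_cgrad_ofReal ha, norm_real, Real.norm_of_nonneg hax]
  calc _ ≤ ‖cgrad (fun y => (a y : ℂ) * u y) x‖ * ‖cgrad u x‖ := norm_inner_le_norm _ _
    _ ≤ (a x * ‖cgrad u x‖ + ‖u x‖ * (K * √(a x))) * ‖cgrad u x‖ := by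
        gcongr
        exact hgrad.trans (by gcongr)
    _ = _ := by ring

lemma integral_norm_mul_sqrt_mul_norm_cgrad_le (hu : ContDiff ℝ 1 u)
    (hus : HasCompactSupport u) (ha : Continuous a) (hapos : ∀ x, 0 ≤ a x) :
    ∫ x, ‖u x‖ * (√(a x) * ‖cgrad u x‖) ≤
      √(∫ x, ‖u x‖ ^ 2) * √(∫ x, a x * ‖cgrad u x‖ ^ 2) := by
  have hmem : MemLp (fun x => √(a x) * ‖cgrad u x‖) 2 :=
    (ha.sqrt.mul (continuous_cgrad hu).norm).memLp_of_hasCompactSupport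
      (hasCompactSupport_cgrad hus).norm.mul_left
  simpa [mul_pow, Real.sq_sqrt, hapos, abs_of_nonneg (Real.sqrt_nonneg _)] using
    integral_norm_mul_norm_le_sqrt_mul_sqrt (hu.continuous.memLp_of_hasCompactSupport hus) hmem

lemma norm_integral_dampCoeff_mul_inner_cgrad_le (hu : ContDiff ℝ 1 u)
    (hus : HasCompactSupport u) (ha : ContDiff ℝ 1 a) (hh : 0 ≤ h) (hK : 0 ≤ K)
    (haC : ∀ x, a x ≤ C) (hapos : ∀ x, 0 ≤ a x) (haK : ∀ x, ‖gradient a x‖ ≤ K * √(a x)) :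
    ‖∫ x, dampCoeff h a x * ⟪cgrad (fun y => (a y : ℂ) * u y) x, cgrad u x⟫_ℂ‖ ≤
      (h ^ 2 + h * C) * ((∫ x, a x * ‖cgrad u x‖ ^ 2) +
        K * (√(∫ x, ‖u x‖ ^ 2) * √(∫ x, a x * ‖cgrad u x‖ ^ 2))) := by
  have hC : 0 ≤ C := (hapos 0).trans (haC 0)
  have hgrad_int := integrable_damping_mul_norm_sq_cgrad hu hus ha.continuous
  have hcross_int : Integrable fun x => ‖u x‖ * (√(a x) * ‖cgrad u x‖) :=
    (hu.continuous.norm.mul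
      (ha.continuous.sqrt.mul (continuous_cgrad hu).norm)).integrable_of_hasCompactSupport
      hus.norm.mul_right
  calc _ ≤ ∫ x, (h ^ 2 + h * C) *
        (a x * ‖cgrad u x‖ ^ 2 + K * (‖u x‖ * (√(a x) * ‖cgrad u x‖))) := by
        refine norm_integral_le_of_norm_le
          ((hgrad_int.add (hcross_int.const_mul K)).const_mul _) (.of_forall fun x => ?_)
        rw [norm_mul]
        gcongr
        · exact norm_dampCoeff_le hh (hapos x) (haC x)
        · exact norm_inner_cgrad_ofReal_mul_le (hu.differentiable one_ne_zero x)
            (ha.differentiable one_ne_zero x) (hapos x) (haK x)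
    _ ≤ _ := by
        rw [integral_const_mul, integral_add hgrad_int (hcross_int.const_mul K),
          integral_const_mul]
        gcongr
        exact integral_norm_mul_sqrt_mul_norm_cgrad_le hu hus ha.continuous hapos

lemma integral_damping_mul_norm_sq_le (hu : ContDiff ℝ 2 u) (hus : HasCompactSupport u)
    (ha : ContDiff ℝ 1 a) (hh : 0 ≤ h) (hK : 0 ≤ K) (haC : ∀ x, a x ≤ C)
    (hapos : ∀ x, 0 ≤ a x) (haK : ∀ x, ‖gradient a x‖ ≤ K * √(a x)) :
    ∫ x, a x * ‖u x‖ ^ 2 ≤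
      (h ^ 2 + h * C) * ((∫ x, a x * ‖cgrad u x‖ ^ 2) +
        K * (√(∫ x, ‖u x‖ ^ 2) * √(∫ x, a x * ‖cgrad u x‖ ^ 2))) +
      C * (√(∫ x, ‖u x‖ ^ 2) * √(∫ x, ‖Ph h a u x‖ ^ 2)) := by
  have hu1 : ContDiff ℝ 1 u := hu.of_le one_le_two
  have hau : ContDiff ℝ 1 fun x => (a x : ℂ) * u x := (ofRealCLM.contDiff.comp ha).mul hu1
  have hweak := integral_conj_mul_Ph hu hus hau ha h
  have hmass : ∫ x, conj ((a x : ℂ) * u x) * u x = ((∫ x, a x * ‖u x‖ ^ 2 : ℝ) : ℂ) := by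
    simp [← integral_complex_ofReal, mul_assoc, conj_mul']
  have hpair := norm_integral_conj_mul_le (φ := fun x => (a x : ℂ) * u x)
    ((hapos 0).trans (haC 0))
    (fun x => by
      rw [norm_mul, norm_real, Real.norm_of_nonneg (hapos x)]
      gcongr
      exact haC x)
    (hu.continuous.memLp_of_hasCompactSupport hus) (memLp_Ph hu hus ha h)
  calc ∫ x, a x * ‖u x‖ ^ 2 ≤ ‖∫ x, conj ((a x : ℂ) * u x) * u x‖ := by
        rw [hmass, norm_real]
        exact Real.le_norm_self _
    _ = ‖(∫ x, dampCoeff h a x * ⟪cgrad (fun y => (a y : ℂ) * u y) x, cgrad u x⟫_ℂ) -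
          ∫ x, conj ((a x : ℂ) * u x) * Ph h a u x‖ := by
        rw [hweak, sub_sub_cancel]
    _ ≤ _ := (norm_sub_le _ _).trans <| add_le_add
        (norm_integral_dampCoeff_mul_inner_cgrad_le hu1 hus ha hh hK haC hapos haK) hpair

end EnergyEstimates

section Cutoff

variable {d : ℕ} {u : EuclideanSpace ℝ (Fin d) → ℂ} {a : EuclideanSpace ℝ (Fin d) → ℝ}
  {g χ : ℝ → ℝ} {K L M : ℝ}

lemma norm_smul_cgrad_comp_mul_le {x : EuclideanSpace ℝ (Fin d)} (hu : DifferentiableAt ℝ u x)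
    (ha : DifferentiableAt ℝ a x) (hg : DifferentiableAt ℝ g (a x)) :
    ‖(a x : ℂ) • cgrad (fun y => (g (a y) : ℂ) * u y) x‖ ≤
      |a x * g (a x)| * ‖cgrad u x‖ + |a x * deriv g (a x)| * (‖gradient a x‖ * ‖u x‖) := by
  have hga : DifferentiableAt ℝ (fun y => g (a y)) x := hg.comp x ha
  have hgac : DifferentiableAt ℝ (fun y => (g (a y) : ℂ)) x :=
    ofRealCLM.differentiableAt.comp x hga
  rw [cgrad_mul hgac hu, smul_add, smul_smul, smul_smul]
  refine (norm_add_le _ _).trans_eq ?_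
  simp only [norm_smul, norm_mul, norm_real, Real.norm_eq_abs, norm_cgrad_ofReal hga,
    norm_gradient_comp hg ha, abs_mul]
  ring

lemma norm_sq_smul_cgrad_comp_mul_le {x : EuclideanSpace ℝ (Fin d)}
    (hu : DifferentiableAt ℝ u x) (ha : DifferentiableAt ℝ a x)
    (hg : DifferentiableAt ℝ g (a x)) (hax : 0 ≤ a x) (haK : ‖gradient a x‖ ≤ K * √(a x))
    (hL : a x * g (a x) ^ 2 ≤ L) (hM : |a x * deriv g (a x)| ≤ M) :
    ‖(a x : ℂ) • cgrad (fun y => (g (a y) : ℂ) * u y) x‖ ^ 2 ≤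
      2 * L * (a x * ‖cgrad u x‖ ^ 2) + 2 * (M * K) ^ 2 * (a x * ‖u x‖ ^ 2) := by
  have hgrad : |a x * deriv g (a x)| * (‖gradient a x‖ * ‖u x‖) ≤
      M * (K * √(a x) * ‖u x‖) := by
    have hM0 : 0 ≤ M := (abs_nonneg _).trans hM
    gcongr
  calc ‖(a x : ℂ) • cgrad (fun y => (g (a y) : ℂ) * u y) x‖ ^ 2
      ≤ (|a x * g (a x)| * ‖cgrad u x‖ + M * (K * √(a x) * ‖u x‖)) ^ 2 := by
        gcongr
        exact (norm_smul_cgrad_comp_mul_le hu ha hg).trans (by gcongr)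
    _ ≤ 2 * ((|a x * g (a x)| * ‖cgrad u x‖) ^ 2 + (M * (K * √(a x) * ‖u x‖)) ^ 2) :=
        add_sq_le
    _ = 2 * (a x * g (a x) ^ 2) * (a x * ‖cgrad u x‖ ^ 2) +
          2 * (M * K) ^ 2 * (a x * ‖u x‖ ^ 2) := by
        simp only [mul_pow, sq_abs, Real.sq_sqrt hax]
        ring
    _ ≤ _ := by gcongr

lemma integral_norm_sq_smul_cgrad_comp_mul_le (hu : ContDiff ℝ 1 u) (hus : HasCompactSupport u)
    (ha : ContDiff ℝ 1 a) (hapos : ∀ x, 0 ≤ a x) (haK : ∀ x, ‖gradient a x‖ ≤ K * √(a x))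
    (hg : Differentiable ℝ g) (hL : ∀ t, t * g t ^ 2 ≤ L) (hM : ∀ t, |t * deriv g t| ≤ M) :
    ∫ x, ‖(a x : ℂ) • cgrad (fun y => (g (a y) : ℂ) * u y) x‖ ^ 2 ≤
      2 * L * (∫ x, a x * ‖cgrad u x‖ ^ 2) + 2 * (M * K) ^ 2 * ∫ x, a x * ‖u x‖ ^ 2 := by
  have hgrad_int := (integrable_damping_mul_norm_sq_cgrad hu hus ha.continuous).const_mul (2 * L)
  have hmass_int : Integrable fun x => 2 * (M * K) ^ 2 * (a x * ‖u x‖ ^ 2) :=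
    ((ha.continuous.mul (hu.continuous.norm.pow 2)).integrable_of_hasCompactSupport <|
      hus.mono fun x hx h => hx <| by simp [h]).const_mul _
  rw [← integral_const_mul, ← integral_const_mul, ← integral_add hgrad_int hmass_int]
  exact integral_mono_of_nonneg (.of_forall fun x => sq_nonneg _) (hgrad_int.add hmass_int)
    (.of_forall fun x => norm_sq_smul_cgrad_comp_mul_le (hu.differentiable one_ne_zero x)
      (ha.differentiable one_ne_zero x) (hg _) (hapos x) (haK x) (hL _) (hM _))

lemma exists_forall_rescaled_cutoff_le (hχ : ContDiff ℝ 1 χ) (hχs : HasCompactSupport χ) :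
    ∃ L M : ℝ, ∀ h > 0, ∀ t, t * χ (t / h) ^ 2 ≤ h * L ∧
      |t * deriv (fun s => χ (s / h)) t| ≤ M := by
  obtain ⟨L, hL⟩ := exists_abs_self_mul_le (hχ.continuous.pow 2)
    (hχs.mono fun x hx h => hx <| by simp [h])
  obtain ⟨M, hM⟩ := exists_abs_self_mul_le hχ.continuous_deriv_one hχs.deriv
  refine ⟨L, M, fun h hh t => ⟨?_, ?_⟩⟩
  · calc t * χ (t / h) ^ 2 = h * (t / h * χ (t / h) ^ 2) := by field_simp
      _ ≤ h * L := by
        gcongr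
        exact (le_abs_self _).trans (hL _)
  · have hderiv : HasDerivAt (fun s => χ (s / h)) (deriv χ (t / h) * (1 / h)) t :=
      (hχ.differentiable one_ne_zero _).hasDerivAt.comp t ((hasDerivAt_id t).div_const h)
    calc |t * deriv (fun s => χ (s / h)) t| = |t / h * deriv χ (t / h)| := by
          rw [hderiv.deriv]
          ring_nf
      _ ≤ M := hM _

end Cutoff

section Quasimodes

variable {d : ℕ} {ι : Type*} {l : Filter ι} {h : ι → ℝ}
  {u : ι → EuclideanSpace ℝ (Fin d) → ℂ} {a : EuclideanSpace ℝ (Fin d) → ℝ} {C K : ℝ}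

lemma isLittleO_one_integral_damping_mul_norm_sq_cgrad (ha : ContDiff ℝ 1 a)
    (hapos : ∀ x, 0 ≤ a x) (hh : ∀ n, 0 < h n) (hu : ∀ n, ContDiff ℝ 2 (u n))
    (hus : ∀ n, HasCompactSupport (u n))
    (hbdd : (fun n => √(∫ x, ‖u n x‖ ^ 2)) =O[l] fun _ => (1 : ℝ))
    (hf : (fun n => √(∫ x, ‖Ph (h n) a (u n) x‖ ^ 2)) =o[l] h) :
    (fun n => ∫ x, a x * ‖cgrad (u n) x‖ ^ 2) =o[l] fun _ => (1 : ℝ) := by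
  have hA (n : ι) : 0 ≤ ∫ x, a x * ‖cgrad (u n) x‖ ^ 2 :=
    integral_nonneg fun x => mul_nonneg (hapos x) (sq_nonneg _)
  have hmul : (fun n => h n * ∫ x, a x * ‖cgrad (u n) x‖ ^ 2) =o[l] fun n => 1 * h n :=
    (IsBigO.of_norm_le fun n => by
      rw [Real.norm_of_nonneg (mul_nonneg (hh n).le (hA n))]
      exact mul_integral_damping_mul_norm_sq_cgrad_le (hu n) (hus n) ha (h n)).trans_isLittleO
      (hbdd.mul_isLittleO hf)
  refine ((isBigO_refl (fun n => (h n)⁻¹) l).mul_isLittleO hmul).congr (fun n => ?_) fun n => ?_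
  · exact inv_mul_cancel_left₀ (hh n).ne' _
  · rw [one_mul, inv_mul_cancel₀ (hh n).ne']

lemma isLittleO_integral_damping_mul_norm_sq (ha : ContDiff ℝ 1 a) (haC : ∀ x, a x ≤ C)
    (hapos : ∀ x, 0 ≤ a x) (hK : 0 ≤ K) (haK : ∀ x, ‖gradient a x‖ ≤ K * √(a x))
    (hh : ∀ n, 0 < h n) (hh1 : h =O[l] fun _ => (1 : ℝ)) (hu : ∀ n, ContDiff ℝ 2 (u n))
    (hus : ∀ n, HasCompactSupport (u n))
    (hbdd : (fun n => √(∫ x, ‖u n x‖ ^ 2)) =O[l] fun _ => (1 : ℝ))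
    (hf : (fun n => √(∫ x, ‖Ph (h n) a (u n) x‖ ^ 2)) =o[l] h) :
    (fun n => ∫ x, a x * ‖u n x‖ ^ 2) =o[l] h := by
  have hA := isLittleO_one_integral_damping_mul_norm_sq_cgrad ha hapos hh hu hus hbdd hf
  have hsqrtA := hA.sqrt (.of_forall fun _ => zero_le_one)
  have hcoeff : (fun n => h n ^ 2 + h n * C) =O[l] h := by
    simpa [sq, mul_add] using
      (isBigO_refl h l).mul (hh1.add (isBigO_const_const C one_ne_zero l))
  have hgrad := hA.add <| IsLittleO.const_mul_left (by simpa using hbdd.mul_isLittleO hsqrtA) K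
  have hres := IsLittleO.const_mul_left (by simpa using hbdd.mul_isLittleO hf) C
  refine (IsBigO.of_norm_le fun n => ?_).trans_isLittleO
    (IsLittleO.add (by simpa using hcoeff.mul_isLittleO hgrad) hres)
  rw [Real.norm_of_nonneg (integral_nonneg fun x => mul_nonneg (hapos x) (sq_nonneg _))]
  exact integral_damping_mul_norm_sq_le (hu n) (hus n) ha (hh n).le hK haC hapos haK

theorem stmt_9_general {χ : ℝ → ℝ} (ha : ContDiff ℝ 1 a) (haC : ∃ C, ∀ x, a x ≤ C)
    (hapos : ∀ x, 0 ≤ a x) (haK : ∀ x, ‖gradient a x‖ ≤ K * √(a x))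
    (hh : ∀ n, 0 < h n) (hh1 : h =O[l] fun _ => (1 : ℝ)) (hu : ∀ n, ContDiff ℝ 2 (u n))
    (hus : ∀ n, HasCompactSupport (u n))
    (hbdd : (fun n => √(∫ x, ‖u n x‖ ^ 2)) =O[l] fun _ => (1 : ℝ))
    (hf : (fun n => √(∫ x, ‖Ph (h n) a (u n) x‖ ^ 2)) =o[l] h)
    (hχ : ContDiff ℝ 1 χ) (hχs : HasCompactSupport χ) :
    (fun n => √(∫ x, ∑ i : Fin d,
        ‖(a x : ℂ) * pd i (fun y => ((χ (a y / h n) : ℝ) : ℂ) * u n y) x‖ ^ 2))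
    =o[l] fun n => √(h n) := by
  obtain ⟨C, haC⟩ := haC
  obtain ⟨L, M, hLM⟩ := exists_forall_rescaled_cutoff_le hχ hχs
  have haK_abs (x : EuclideanSpace ℝ (Fin d)) : ‖gradient a x‖ ≤ |K| * √(a x) :=
    (haK x).trans (by gcongr; exact le_abs_self K)
  have hA := isLittleO_one_integral_damping_mul_norm_sq_cgrad ha hapos hh hu hus hbdd hf
  have hB := isLittleO_integral_damping_mul_norm_sq ha haC hapos (abs_nonneg K) haK_abs hh hh1
    hu hus hbdd hf
  have hbound (n : ι) :
      ∫ x, ‖(a x : ℂ) • cgrad (fun y => ((χ (a y / h n) : ℝ) : ℂ) * u n y) x‖ ^ 2 ≤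
        2 * (h n * L) * (∫ x, a x * ‖cgrad (u n) x‖ ^ 2) +
          2 * (M * K) ^ 2 * ∫ x, a x * ‖u n x‖ ^ 2 :=
    integral_norm_sq_smul_cgrad_comp_mul_le (g := fun t => χ (t / h n))
      ((hu n).of_le one_le_two) (hus n) ha hapos haK
      ((hχ.differentiable one_ne_zero).comp (differentiable_id.div_const _))
      (fun t => (hLM (h n) (hh n) t).1) (fun t => (hLM (h n) (hh n) t).2)
  have hrhs : (fun n => 2 * (h n * L) * (∫ x, a x * ‖cgrad (u n) x‖ ^ 2) +
      2 * (M * K) ^ 2 * ∫ x, a x * ‖u n x‖ ^ 2) =o[l] h := by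
    refine IsLittleO.add ?_ (hB.const_mul_left _)
    have hhL : (fun n => 2 * (h n * L)) =O[l] h :=
      ((isBigO_refl h l).const_mul_left (2 * L)).congr_left fun n => by ring
    simpa only [mul_one] using hhL.mul_isLittleO hA
  refine IsLittleO.sqrt ?_ (.of_forall fun n => (hh n).le)
  refine (IsBigO.of_norm_le fun n => ?_).trans_isLittleO hrhs
  simp only [← norm_sq_smul_cgrad]
  rw [Real.norm_of_nonneg (integral_nonneg fun x => sq_nonneg _)]
  exact hbound n

end Quasimodes

/-- **The estimate `a∇(χ(a/h)u) = o_{L²}(h^{1/2})` of Section 4.2.1 of the paper**: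
for a contradiction sequence and a cutoff `χ` as above,
`‖a ∇(χ(a/h_n) u_n)‖_{L²} = o(h_n^{1/2})`. -/
theorem stmt_9 (d : ℕ) (hd : 1 ≤ d)
    (a : EuclideanSpace ℝ (Fin d) → ℝ) (K : ℝ)
    (haC1 : ContDiff ℝ 1 a) (habd : ∃ C, ∀ x, a x ≤ C) (hapos : ∀ x, 0 ≤ a x)
    (haK : ∀ x, ‖gradient a x‖ ≤ K * Real.sqrt (a x))
    (h : ℕ → ℝ) (u : ℕ → EuclideanSpace ℝ (Fin d) → ℂ)
    (hhpos : ∀ n, 0 < h n) (hh0 : Tendsto h atTop (nhds 0))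
    (husm : ∀ n, ContDiff ℝ (⊤ : ℕ∞) (u n)) (husupp : ∀ n, HasCompactSupport (u n))
    (hunorm : ∀ n, (∫ x, ‖u n x‖ ^ 2) = 1)
    (hf : (fun n => Real.sqrt (∫ x, ‖Ph (h n) a (u n) x‖ ^ 2)) =o[atTop] h)
    (χ : ℝ → ℝ) (hχ : ContDiff ℝ (⊤ : ℕ∞) χ) (hχsupp : HasCompactSupport χ)
    (hχ1 : ∀ z : ℝ, |z| ≤ 1 → χ z = 1) (hχ0 : ∀ z : ℝ, 2 ≤ |z| → χ z = 0) :
    (fun n => Real.sqrt (∫ x, ∑ i : Fin d,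
        ‖(a x : ℂ) * pd i (fun y => ((χ (a y / h n) : ℝ) : ℂ) * u n y) x‖ ^ 2))
    =o[atTop] (fun n => Real.sqrt (h n)) := by
  exact stmt_9_general haC1 habd hapos haK hhpos (hh0.isBigO_one ℝ)
    (fun n => mod_cast contDiff_infty.1 (husm n) 2) husupp
    (by simpa only [hunorm, Real.sqrt_one] using isBigO_refl _ _) hf
    (mod_cast contDiff_infty.1 hχ 1) hχsupp

end
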